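/- Let K ∈ ℝ^{n×r} be entrywise positive, let a ∈ ℝ^n be entrywise positive, and let γ, τ > 0. Then the matrix Q* = diag((a / (K 1_r))^{τγ/(1+τγ)}) · K (where division and the power are entrywise) minimizes the objective F(Q) = (1/γ) · KL(Q ∥ K) + τ · KL(Q 1_r ∥ a) over all entrywise-nonnegative matrices Q ∈ ℝ^{n×r}, where KL denotes the generalized Kullback–Leibler divergence applied entrywise to matrices and coordinatewise to vectors. -/

import Mathlib

open Matrix

/-- The generalized Kullback–Leibler divergence between two matrices
(with the convention `0 · log 0 = 0`, automatic since `Real.log 0 = 0`). -/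
noncomputable def matKL {n r : ℕ} (P K : Matrix (Fin n) (Fin r) ℝ) : ℝ :=
  ∑ i, ∑ j, (P i j * Real.log (P i j / K i j) - P i j + K i j)

/-- The generalized Kullback–Leibler divergence between two vectors. -/
noncomputable def vecKL {n : ℕ} (p q : Fin n → ℝ) : ℝ :=
  ∑ i, (p i * Real.log (p i / q i) - p i + q i)

/-!
Relative to any reference point `S`, the generalized Kullback–Leibler divergence splits as
`KL(P ∥ K) = KL(P ∥ S) + KL(S ∥ K) + ⟨P - S, log (S / K)⟩`. For `S = diag(u) K` the factor
`log (S / K)` is constant along rows, so both linear terms of the objective depend on `Q` only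
through `Q 1`, and they cancel as soon as `(1/γ) log u + τ log (S 1 / a) = 0`. The exponent
`τγ / (1 + τγ)` solves this equation, and then
`F(Q) - F(S) = (1/γ) KL(Q ∥ S) + τ KL(Q 1 ∥ S 1) ≥ 0`.
-/

/-- The generalized Kullback–Leibler divergence between two real numbers: the summand of both
`matKL` and `vecKL`. -/
noncomputable def scalarKL (p q : ℝ) : ℝ :=
  p * Real.log (p / q) - p + q

lemma scalarKL_nonneg {p q : ℝ} (hp : 0 ≤ p) (hq : 0 < q) : 0 ≤ scalarKL p q := by
  have h_klFun : scalarKL p q = q * InformationTheory.klFun (p / q) := by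
    rw [scalarKL, InformationTheory.klFun]
    field_simp
    ring
  rw [h_klFun]
  exact mul_nonneg hq.le (InformationTheory.klFun_nonneg (div_nonneg hp hq.le))

lemma scalarKL_three_point (p : ℝ) {s q : ℝ} (hs : s ≠ 0) (hq : q ≠ 0) :
    scalarKL p q = scalarKL p s + scalarKL s q + (p - s) * Real.log (s / q) := by
  rcases eq_or_ne p 0 with rfl | hp
  · simp only [scalarKL]
    ring
  · simp only [scalarKL, Real.log_div hp hq, Real.log_div hp hs, Real.log_div hs hq]
    ring

section Divergence

variable {n r : ℕ}

lemma vecKL_nonneg {p q : Fin n → ℝ} (hp : ∀ i, 0 ≤ p i) (hq : ∀ i, 0 < q i) :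
    0 ≤ vecKL p q :=
  Finset.sum_nonneg fun i _ => scalarKL_nonneg (hp i) (hq i)

lemma matKL_nonneg {P K : Matrix (Fin n) (Fin r) ℝ} (hP : ∀ i j, 0 ≤ P i j)
    (hK : ∀ i j, 0 < K i j) : 0 ≤ matKL P K :=
  Finset.sum_nonneg fun i _ => vecKL_nonneg (hP i) (hK i)

lemma vecKL_three_point (p : Fin n → ℝ) {s q : Fin n → ℝ} (hs : ∀ i, s i ≠ 0)
    (hq : ∀ i, q i ≠ 0) :
    vecKL p q = vecKL p s + vecKL s q + ∑ i, (p i - s i) * Real.log (s i / q i) := by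
  simp only [vecKL, ← Finset.sum_add_distrib]
  exact Finset.sum_congr rfl fun i _ => scalarKL_three_point (p i) (hs i) (hq i)

lemma matKL_three_point (P : Matrix (Fin n) (Fin r) ℝ) {S K : Matrix (Fin n) (Fin r) ℝ}
    (hS : ∀ i j, S i j ≠ 0) (hK : ∀ i j, K i j ≠ 0) :
    matKL P K =
      matKL P S + matKL S K + ∑ i, ∑ j, (P i j - S i j) * Real.log (S i j / K i j) := by
  simp only [matKL, ← Finset.sum_add_distrib]
  exact Finset.sum_congr rfl fun i _ => Finset.sum_congr rfl fun j _ =>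
    scalarKL_three_point (P i j) (hS i j) (hK i j)

lemma mulVec_const_one_apply (A : Matrix (Fin n) (Fin r) ℝ) (i : Fin n) :
    (A *ᵥ fun _ => 1) i = ∑ j, A i j := by
  simp only [mulVec, dotProduct, mul_one]

lemma diagonal_mul_mulVec_const_one_apply (u : Fin n → ℝ) (K : Matrix (Fin n) (Fin r) ℝ)
    (i : Fin n) : ((diagonal u * K) *ᵥ fun _ => 1) i = u i * ∑ j, K i j := by
  simp only [mulVec_const_one_apply, diagonal_mul, Finset.mul_sum]

lemma matKL_three_point_diagonal_mul (P : Matrix (Fin n) (Fin r) ℝ)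
    {K : Matrix (Fin n) (Fin r) ℝ} {u : Fin n → ℝ} (hK : ∀ i j, K i j ≠ 0)
    (hu : ∀ i, u i ≠ 0) :
    matKL P K = matKL P (diagonal u * K) + matKL (diagonal u * K) K +
      ∑ i, ((P *ᵥ fun _ => 1) i - ((diagonal u * K) *ᵥ fun _ => 1) i) * Real.log (u i) := by
  have h_ne : ∀ i j, (diagonal u * K) i j ≠ 0 := fun i j => by
    rw [diagonal_mul]
    exact mul_ne_zero (hu i) (hK i j)
  have h_ratio : ∀ i j, (diagonal u * K) i j / K i j = u i := fun i j => by
    rw [diagonal_mul, mul_div_cancel_right₀ _ (hK i j)]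
  simp only [matKL_three_point P h_ne hK, h_ratio, mulVec_const_one_apply,
    ← Finset.sum_sub_distrib, Finset.sum_mul]

end Divergence

section Objective

variable {n r : ℕ} {K : Matrix (Fin n) (Fin r) ℝ} {a u : Fin n → ℝ} {γ τ : ℝ}

/-- The objective `F(Q) = (1/γ) KL(Q ∥ K) + τ KL(Q 1 ∥ a)`. -/
noncomputable def klObjective (K : Matrix (Fin n) (Fin r) ℝ) (a : Fin n → ℝ) (γ τ : ℝ)
    (Q : Matrix (Fin n) (Fin r) ℝ) : ℝ :=
  (1 / γ) * matKL Q K + τ * vecKL (Q *ᵥ fun _ => 1) a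

/-- First-order optimality of the row scaling `diag(u) K` for `klObjective K a γ τ`: the gradient
`(1/γ) log (Q i j / K i j) + τ log ((Q 1) i / a i)` vanishes at `Q = diag(u) K`. -/
def IsStationaryScaling (K : Matrix (Fin n) (Fin r) ℝ) (a : Fin n → ℝ) (γ τ : ℝ)
    (u : Fin n → ℝ) : Prop :=
  ∀ i, (1 / γ) * Real.log (u i) + τ * Real.log (u i * (∑ j, K i j) / a i) = 0

theorem IsStationaryScaling.klObjective_eq_add (h : IsStationaryScaling K a γ τ u)
    (hK : ∀ i j, K i j ≠ 0) (ha : ∀ i, a i ≠ 0) (hu : ∀ i, u i ≠ 0)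
    (hrow : ∀ i, ∑ j, K i j ≠ 0) (Q : Matrix (Fin n) (Fin r) ℝ) :
    klObjective K a γ τ Q = klObjective K a γ τ (diagonal u * K) +
      klObjective (diagonal u * K) ((diagonal u * K) *ᵥ fun _ => 1) γ τ Q := by
  set s := (diagonal u * K) *ᵥ fun _ => 1 with hs
  have hs_apply : ∀ i, s i = u i * ∑ j, K i j := diagonal_mul_mulVec_const_one_apply u K
  have hs_ne : ∀ i, s i ≠ 0 := fun i => by
    rw [hs_apply]
    exact mul_ne_zero (hu i) (hrow i)
  have h_linear : (1 / γ) * ∑ i, ((Q *ᵥ fun _ => 1) i - s i) * Real.log (u i) +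
      τ * ∑ i, ((Q *ᵥ fun _ => 1) i - s i) * Real.log (s i / a i) = 0 := by
    rw [Finset.mul_sum, Finset.mul_sum, ← Finset.sum_add_distrib]
    refine Finset.sum_eq_zero fun i _ => ?_
    rw [hs_apply]
    linear_combination ((Q *ᵥ fun _ => 1) i - u i * ∑ j, K i j) * h i
  simp only [klObjective]
  rw [matKL_three_point_diagonal_mul Q hK hu, vecKL_three_point _ hs_ne ha, ← hs]
  linear_combination h_linear

lemma klObjective_nonneg {Q : Matrix (Fin n) (Fin r) ℝ} (hK : ∀ i j, 0 < K i j)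
    (ha : ∀ i, 0 < a i) (hγ : 0 ≤ γ) (hτ : 0 ≤ τ) (hQ : ∀ i j, 0 ≤ Q i j) :
    0 ≤ klObjective K a γ τ Q := by
  have h_sum : ∀ i, 0 ≤ (Q *ᵥ fun _ => 1) i := fun i => by
    rw [mulVec_const_one_apply]
    exact Finset.sum_nonneg fun j _ => hQ i j
  exact add_nonneg (mul_nonneg (one_div_nonneg.mpr hγ) (matKL_nonneg hQ hK))
    (mul_nonneg hτ (vecKL_nonneg h_sum ha))

theorem IsStationaryScaling.klObjective_le (h : IsStationaryScaling K a γ τ u)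
    (hK : ∀ i j, 0 < K i j) (ha : ∀ i, a i ≠ 0) (hu : ∀ i, 0 < u i)
    (hrow : ∀ i, 0 < ∑ j, K i j) (hγ : 0 ≤ γ) (hτ : 0 ≤ τ)
    {Q : Matrix (Fin n) (Fin r) ℝ} (hQ : ∀ i j, 0 ≤ Q i j) :
    klObjective K a γ τ (diagonal u * K) ≤ klObjective K a γ τ Q := by
  have hS : ∀ i j, 0 < (diagonal u * K) i j := fun i j => by
    rw [diagonal_mul]
    exact mul_pos (hu i) (hK i j)
  have hs : ∀ i, 0 < ((diagonal u * K) *ᵥ fun _ => 1) i := fun i => by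
    rw [diagonal_mul_mulVec_const_one_apply]
    exact mul_pos (hu i) (hrow i)
  rw [h.klObjective_eq_add (fun i j => (hK i j).ne') ha (fun i => (hu i).ne')
    (fun i => (hrow i).ne') Q]
  exact le_add_of_nonneg_right (klObjective_nonneg hS hs hγ hτ hQ)

lemma isStationaryScaling_rpow (ha : ∀ i, 0 < a i) (hrow : ∀ i, 0 < ∑ j, K i j)
    (hγ : γ ≠ 0) (hτγ : 1 + τ * γ ≠ 0) :
    IsStationaryScaling K a γ τ fun i => (a i / ∑ j, K i j) ^ (τ * γ / (1 + τ * γ)) := by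
  intro i
  have h_ratio : 0 < a i / ∑ j, K i j := div_pos (ha i) (hrow i)
  have h_log : ∀ x, 0 < x → Real.log (x * (∑ j, K i j) / a i) =
      Real.log x - Real.log (a i / ∑ j, K i j) := fun x hx => by
    rw [mul_div_assoc, ← inv_div (a i), ← div_eq_mul_inv, Real.log_div hx.ne' h_ratio.ne']
  have h_exponent : (1 / γ) * (τ * γ / (1 + τ * γ)) + τ * (τ * γ / (1 + τ * γ) - 1) = 0 := by
    rw [div_sub_one hτγ]
    field_simp
    ring
  rw [h_log _ (Real.rpow_pos_of_pos h_ratio _), Real.log_rpow h_ratio]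
  linear_combination Real.log (a i / ∑ j, K i j) * h_exponent

end Objective

/-- `Q* = diag((a / (K 1))^{τγ/(1+τγ)}) K` minimizes
`(1/γ) KL(Q ∥ K) + τ KL(Q 1 ∥ a)` over all entrywise-nonnegative `Q`. -/
theorem stmt19 {n r : ℕ} (K : Matrix (Fin n) (Fin r) ℝ) (hK : ∀ i j, 0 < K i j)
    (a : Fin n → ℝ) (ha : ∀ i, 0 < a i) (γ τ : ℝ) (hγ : 0 < γ) (hτ : 0 < τ) :
    ∀ Q : Matrix (Fin n) (Fin r) ℝ, (∀ i j, 0 ≤ Q i j) →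
      (1 / γ) * matKL (Matrix.diagonal
          (fun i => (a i / ∑ j, K i j) ^ (τ * γ / (1 + τ * γ))) * K) K
        + τ * vecKL ((Matrix.diagonal
            (fun i => (a i / ∑ j, K i j) ^ (τ * γ / (1 + τ * γ))) * K) *ᵥ (fun _ => 1)) a
      ≤ (1 / γ) * matKL Q K + τ * vecKL (Q *ᵥ (fun _ => 1)) a := by
  intro Q hQ
  rcases isEmpty_or_nonempty (Fin r) with _ | _
  · rw [Subsingleton.elim Q]
  · have hrow : ∀ i, 0 < ∑ j, K i j := fun i =>
      Finset.sum_pos (fun j _ => hK i j) Finset.univ_nonempty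
    have h_stationary := isStationaryScaling_rpow ha hrow hγ.ne' (τ := τ) (by positivity)
    exact h_stationary.klObjective_le hK (fun i => (ha i).ne')
      (fun i => Real.rpow_pos_of_pos (div_pos (ha i) (hrow i)) _) hrow hγ.le hτ.le hQ
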